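/- Let A, B be n×n Hermitian complex matrices forming a definite pair, i.e., there exists c > 0 such that for every x ∈ ℂⁿ with ‖x‖ = 1, (Re(x*Ax))² + (Re(x*Bx))² ≥ c. Then there exists an invertible complex matrix U and real vectors α, β ∈ ℝⁿ such that U*AU = diag(α₁,…,αₙ) and U*BU = diag(β₁,…,βₙ). -/

import Mathlib

open Matrix

/-!
For Hermitian `A` and `B`, the numerical range of `A + iB` consists of the points
`(x*Ax, x*Bx)` with `‖x‖ = 1`, so the pair is definite exactly when this compact set omits `0`.
By the Toeplitz–Hausdorff theorem the numerical range is convex, hence a line strictly separates it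
from `0`; turning the normal of that line onto the real axis makes `cos θ • A + sin θ • B`
positive definite. A positive definite matrix can be brought to the identity by a congruence, and
a further unitary congruence preserves the identity while it diagonalizes
`-sin θ • A + cos θ • B`. Rotating back by `θ` recovers `A` and `B`.
-/

open scoped ComplexOrder InnerProductSpace

section NumericalRange

variable {𝕜 E : Type*} [RCLike 𝕜] [NormedAddCommGroup E] [InnerProductSpace 𝕜 E]

/-- The numerical range (field of values) of a linear operator: the values of its quadratic form
`x ↦ ⟪x, T x⟫` on the unit sphere. -/
def numericalRange (T : E →ₗ[𝕜] E) : Set 𝕜 :=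
  (fun x ↦ ⟪x, T x⟫_𝕜) '' Metric.sphere 0 1

theorem mem_numericalRange_of_inner_map_self_eq_smul {T : E →ₗ[𝕜] E} {x : E} {p : 𝕜}
    (hx : x ≠ 0) (hxp : ⟪x, T x⟫_𝕜 = ‖x‖ ^ 2 • p) : p ∈ numericalRange T := by
  refine ⟨(‖x‖⁻¹ : 𝕜) • x, by simpa using norm_smul_inv_norm (𝕜 := 𝕜) hx, ?_⟩
  have hnorm : (‖x‖ : 𝕜) ≠ 0 := by simpa using hx
  simp only [map_smul, inner_smul_left, inner_smul_right, hxp, map_inv₀, RCLike.conj_ofReal,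
    RCLike.real_smul_eq_coe_mul, RCLike.ofReal_pow]
  field_simp

theorem isCompact_numericalRange [FiniteDimensional 𝕜 E] (T : E →ₗ[𝕜] E) :
    IsCompact (numericalRange T) := by
  have := FiniteDimensional.proper_rclike 𝕜 E
  exact (isCompact_sphere 0 1).image (continuous_id.inner T.continuous_of_finiteDimensional)

theorem inner_smul_add_smul_map_self (T : E →ₗ[𝕜] E) (x y : E) (a b : ℝ) :
    ⟪(a : 𝕜) • x + (b : 𝕜) • y, T ((a : 𝕜) • x + (b : 𝕜) • y)⟫_𝕜 =
      (a ^ 2) • ⟪x, T x⟫_𝕜 + (a * b) • (⟪x, T y⟫_𝕜 + ⟪y, T x⟫_𝕜) + (b ^ 2) • ⟪y, T y⟫_𝕜 := by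
  simp only [map_add, map_smul, inner_add_left, inner_add_right, inner_smul_left,
    inner_smul_right, RCLike.conj_ofReal, RCLike.real_smul_eq_coe_mul, RCLike.ofReal_pow,
    RCLike.ofReal_mul]
  ring

theorem linearIndependent_pair_of_inner_map_self_pos_of_neg (T : E →ₗ[𝕜] E) {x y : E}
    (hx : 0 < ⟪x, T x⟫_𝕜) (hy : ⟪y, T y⟫_𝕜 < 0) : LinearIndependent 𝕜 ![x, y] := by
  refine LinearIndependent.pair_iff.mpr fun a b hab ↦ ?_
  have hab_inner : a * star a * ⟪x, T x⟫_𝕜 = b * star b * ⟪y, T y⟫_𝕜 := by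
    have hinner : ⟪a • x, T (a • x)⟫_𝕜 = ⟪b • y, T (b • y)⟫_𝕜 := by
      rw [eq_neg_of_add_eq_zero_left hab, map_neg, inner_neg_neg]
    simpa only [map_smul, inner_smul_left, inner_smul_right, ← mul_assoc, starRingEnd_apply]
      using hinner
  have ha_nonneg : 0 ≤ a * star a * ⟪x, T x⟫_𝕜 := mul_nonneg (mul_star_self_nonneg a) hx.le
  have hb_nonpos : b * star b * ⟪y, T y⟫_𝕜 ≤ 0 :=
    mul_nonpos_of_nonneg_of_nonpos (mul_star_self_nonneg b) hy.le
  have ha : a * star a * ⟪x, T x⟫_𝕜 = 0 := (hab_inner.trans_le hb_nonpos).antisymm ha_nonneg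
  have hb : b * star b * ⟪y, T y⟫_𝕜 = 0 := hab_inner.symm.trans ha
  simpa [hx.ne', hy.ne] using And.intro ha hb

end NumericalRange

section ToeplitzHausdorff

variable {E : Type*} [NormedAddCommGroup E] [InnerProductSpace ℂ E]

theorem exists_norm_eq_one_im_inner_add_inner_eq_zero (T : E →ₗ[ℂ] E) (x y : E) :
    ∃ v : ℂ, ‖v‖ = 1 ∧ (⟪x, T (v • y)⟫_ℂ + ⟪v • y, T x⟫_ℂ).im = 0 := by
  obtain ⟨v, hv, hvw⟩ := Complex.exists_norm_eq_mul_self (⟪x, T y⟫_ℂ - ⟪T x, y⟫_ℂ)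
  refine ⟨v, hv, ?_⟩
  calc (⟪x, T (v • y)⟫_ℂ + ⟪v • y, T x⟫_ℂ).im
    _ = (v * (⟪x, T y⟫_ℂ - ⟪T x, y⟫_ℂ)).im := by
      rw [← inner_conj_symm (T x) y, map_smul, inner_smul_left, inner_smul_right]
      simp only [Complex.add_im, Complex.sub_re, Complex.sub_im, Complex.mul_im, Complex.conj_re,
        Complex.conj_im]
      ring
    _ = 0 := by rw [← hvw, Complex.ofReal_im]

theorem exists_ne_zero_inner_map_self_eq_zero (T : E →ₗ[ℂ] E) {x y : E}
    (hx : 0 < ⟪x, T x⟫_ℂ) (hy : ⟪y, T y⟫_ℂ < 0) : ∃ z ≠ 0, ⟪z, T z⟫_ℂ = 0 := by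
  obtain ⟨v, hv, hcross⟩ := exists_norm_eq_one_im_inner_add_inner_eq_zero T x y
  have hvy : ⟪v • y, T (v • y)⟫_ℂ < 0 := by
    rwa [map_smul, inner_smul_left, inner_smul_right, ← mul_assoc, Complex.conj_mul', hv,
      Complex.ofReal_one, one_pow, one_mul]
  obtain ⟨hx_re, hx_im⟩ := Complex.pos_iff.mp hx
  obtain ⟨hvy_re, hvy_im⟩ := Complex.neg_iff.mp hvy
  let f : ℝ → ℝ := fun u ↦ (1 - u) ^ 2 * (⟪x, T x⟫_ℂ).re +
    (1 - u) * u * (⟪x, T (v • y)⟫_ℂ + ⟪v • y, T x⟫_ℂ).re + u ^ 2 * (⟪v • y, T (v • y)⟫_ℂ).re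
  have hf : Continuous f := by fun_prop
  -- The phase `v` keeps the form real along the segment from `x` to `v • y`.
  obtain ⟨u, -, hu : f u = 0⟩ : 0 ∈ f '' Set.Icc 0 1 :=
    intermediate_value_Icc' zero_le_one hf.continuousOn
      ⟨by simpa [f] using hvy_re.le, by simpa [f] using hx_re.le⟩
  refine ⟨((1 - u : ℝ) : ℂ) • x + (u : ℂ) • v • y, fun hz ↦ ?_, ?_⟩
  · obtain ⟨hu1, hu0⟩ := LinearIndependent.pair_iff.mp
      (linearIndependent_pair_of_inner_map_self_pos_of_neg T hx hvy) _ _ hz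
    norm_cast at hu1 hu0
    linarith
  · refine (inner_smul_add_smul_map_self T x (v • y) (1 - u) u).trans (Complex.ext ?_ ?_)
    · simpa only [f, Complex.add_re, Complex.smul_re, smul_eq_mul, Complex.zero_re] using hu
    · rw [Complex.add_im, Complex.add_im, Complex.smul_im, Complex.smul_im, Complex.smul_im,
        hcross, hvy_im, ← hx_im]
      simp

theorem convex_numericalRange (T : E →ₗ[ℂ] E) : Convex ℝ (numericalRange T) := by
  rw [convex_iff_pairwise_pos]
  rintro _ ⟨x, hx, rfl⟩ _ ⟨y, hy, rfl⟩ hne s t hs ht hst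
  rw [mem_sphere_zero_iff_norm] at hx hy
  dsimp only at hne ⊢
  set a := ⟪x, T x⟫_ℂ
  set b := ⟪y, T y⟫_ℂ
  have hab : a - b ≠ 0 := sub_ne_zero.mpr hne
  -- The affine map sending `s • a + t • b` to `0` and `a`, `b` to the reals `t`, `-s`.
  let S : E →ₗ[ℂ] E := (a - b)⁻¹ • (T - (s • a + t • b) • LinearMap.id)
  have inner_S (z : E) :
      ⟪z, S z⟫_ℂ = (a - b)⁻¹ * (⟪z, T z⟫_ℂ - ‖z‖ ^ 2 • (s • a + t • b)) := by
    simp only [S, LinearMap.smul_apply, LinearMap.sub_apply, LinearMap.id_apply, inner_smul_right,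
      inner_sub_right, inner_self_eq_norm_sq_to_K, Complex.real_smul, Complex.ofReal_pow,
      Complex.coe_algebraMap]
    ring
  have hst' : (s : ℂ) + t = 1 := by exact_mod_cast hst
  have hxS : ⟪x, S x⟫_ℂ = t := by
    rw [inner_S, hx, one_pow, one_smul, inv_mul_eq_iff_eq_mul₀ hab]
    simp only [Complex.real_smul]
    linear_combination (-a) * hst'
  have hyS : ⟪y, S y⟫_ℂ = -s := by
    rw [inner_S, hy, one_pow, one_smul, inv_mul_eq_iff_eq_mul₀ hab]
    simp only [Complex.real_smul]
    linear_combination (-b) * hst'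
  obtain ⟨z, hz, hzS⟩ := exists_ne_zero_inner_map_self_eq_zero S
    (by rw [hxS]; exact_mod_cast ht) (by rw [hyS]; exact_mod_cast neg_lt_zero.mpr hs)
  rw [inner_S, mul_eq_zero_iff_left (inv_ne_zero hab), sub_eq_zero] at hzS
  exact mem_numericalRange_of_inner_map_self_eq_smul hz hzS

end ToeplitzHausdorff

theorem exists_angle_forall_pos_of_zero_notMem {K : Set ℂ} (hK : Convex ℝ K) (hKc : IsClosed K)
    (h0 : 0 ∉ K) : ∃ θ : ℝ, ∀ z ∈ K, 0 < Real.cos θ * z.re + Real.sin θ * z.im := by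
  obtain ⟨f, u, hu, hf⟩ := geometric_hahn_banach_point_closed hK hKc h0
  let w : ℂ := (InnerProductSpace.toDual ℝ ℂ).symm f
  refine ⟨w.arg, fun z hz ↦ pos_of_mul_pos_right ?_ (norm_nonneg w)⟩
  calc 0
    _ < f z := (map_zero f ▸ hu).trans (hf z hz)
    _ = ⟪w, z⟫_ℝ := InnerProductSpace.toDual_symm_apply.symm
    _ = w.re * z.re + w.im * z.im := by
      rw [Complex.inner, Complex.mul_re, Complex.conj_re, Complex.conj_im]; ring
    _ = ‖w‖ * (Real.cos w.arg * z.re + Real.sin w.arg * z.im) := by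
      rw [mul_add, ← mul_assoc, ← mul_assoc, Complex.norm_mul_cos_arg, Complex.norm_mul_sin_arg]

theorem exists_angle_forall_inner_map_self_pos {E : Type*} [NormedAddCommGroup E]
    [InnerProductSpace ℂ E] [FiniteDimensional ℂ E] {T : E →ₗ[ℂ] E}
    (h0 : 0 ∉ numericalRange T) : ∃ θ : ℝ, ∀ x ≠ 0,
      0 < Real.cos θ * (⟪x, T x⟫_ℂ).re + Real.sin θ * (⟪x, T x⟫_ℂ).im := by
  obtain ⟨θ, hθ⟩ := exists_angle_forall_pos_of_zero_notMem (convex_numericalRange T)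
    (isCompact_numericalRange T).isClosed h0
  refine ⟨θ, fun x hx ↦ ?_⟩
  have hsq : 0 < ‖x‖ ^ 2 := by positivity
  have hpos := hθ ((‖x‖ ^ 2)⁻¹ • ⟪x, T x⟫_ℂ)
    (mem_numericalRange_of_inner_map_self_eq_smul hx (smul_inv_smul₀ hsq.ne' _).symm)
  rw [Complex.smul_re, Complex.smul_im, smul_eq_mul, smul_eq_mul] at hpos
  refine pos_of_mul_pos_right (hpos.trans_eq ?_) (inv_pos.mpr hsq).le
  ring

section Matrix

variable {𝕜 ι : Type*} [RCLike 𝕜] [Fintype ι] [DecidableEq ι]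

theorem inner_toEuclideanLin_self (M : Matrix ι ι 𝕜) (x : EuclideanSpace 𝕜 ι) :
    ⟪x, toEuclideanLin M x⟫_𝕜 = star x.ofLp ⬝ᵥ M *ᵥ x.ofLp := by
  rw [EuclideanSpace.inner_eq_star_dotProduct, ofLp_toLpLin, toLin'_apply, dotProduct_comm]

theorem inner_toEuclideanLin_add_I_smul_self {A B : Matrix ι ι ℂ} (hA : A.IsHermitian)
    (hB : B.IsHermitian) (x : EuclideanSpace ℂ ι) :
    ⟪x, toEuclideanLin (A + Complex.I • B) x⟫_ℂ =
      ⟨(star x.ofLp ⬝ᵥ A *ᵥ x.ofLp).re, (star x.ofLp ⬝ᵥ B *ᵥ x.ofLp).re⟩ := by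
  have hA_im := hA.im_star_dotProduct_mulVec_self x.ofLp
  have hB_im := hB.im_star_dotProduct_mulVec_self x.ofLp
  rw [RCLike.im_to_complex] at hA_im hB_im
  rw [inner_toEuclideanLin_self, add_mulVec, smul_mulVec, dotProduct_add, dotProduct_smul]
  apply Complex.ext <;> simp [hA_im, hB_im]

theorem exists_posDef_cos_smul_add_sin_smul {ι : Type*} [Fintype ι] {A B : Matrix ι ι ℂ}
    (hA : A.IsHermitian) (hB : B.IsHermitian)
    (hdef : ∀ x : EuclideanSpace ℂ ι, ‖x‖ = 1 →
      0 < (star x.ofLp ⬝ᵥ A *ᵥ x.ofLp).re ^ 2 + (star x.ofLp ⬝ᵥ B *ᵥ x.ofLp).re ^ 2) :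
    ∃ θ : ℝ, (Real.cos θ • A + Real.sin θ • B).PosDef := by
  classical
  have h0 : 0 ∉ numericalRange (toEuclideanLin (A + Complex.I • B)) := by
    rintro ⟨x, hx, hx0⟩
    simp only [inner_toEuclideanLin_add_I_smul_self hA hB, Complex.ext_iff, Complex.zero_re,
      Complex.zero_im] at hx0
    have hpos := hdef x (mem_sphere_zero_iff_norm.mp hx)
    simp [hx0.1, hx0.2] at hpos
  obtain ⟨θ, hθ⟩ := exists_angle_forall_inner_map_self_pos h0
  have hH : (Real.cos θ • A + Real.sin θ • B).IsHermitian :=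
    (hA.smul (.all _)).add (hB.smul (.all _))
  refine ⟨θ, posDef_iff_dotProduct_mulVec.mpr ⟨hH, fun x hx ↦ Complex.pos_iff.mpr
    ⟨?_, (hH.im_star_dotProduct_mulVec_self x).symm⟩⟩⟩
  have hpos := hθ (WithLp.toLp 2 x) (by simpa using hx)
  rw [inner_toEuclideanLin_add_I_smul_self hA hB] at hpos
  simpa [-Complex.ofReal_cos, -Complex.ofReal_sin, add_mulVec, smul_mulVec] using hpos

open scoped MatrixOrder in
theorem exists_isUnit_conjTranspose_mul_mul_eq_one {M : Matrix ι ι 𝕜} (hM : M.PosDef) :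
    ∃ S : Matrix ι ι 𝕜, IsUnit S ∧ Sᴴ * M * S = 1 := by
  obtain ⟨L, hL, rfl⟩ :=
    CStarAlgebra.isStrictlyPositive_iff_eq_star_mul_self.mp hM.isStrictlyPositive
  have hLinv : L * L⁻¹ = 1 := mul_nonsing_inv L ((isUnit_iff_isUnit_det L).mp hL)
  refine ⟨L⁻¹, isUnit_nonsing_inv_iff.mpr hL, ?_⟩
  calc (L⁻¹)ᴴ * (Lᴴ * L) * L⁻¹
    _ = (L * L⁻¹)ᴴ * (L * L⁻¹) := by simp only [conjTranspose_mul, Matrix.mul_assoc]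
    _ = 1 := by rw [hLinv, conjTranspose_one, one_mul]

theorem exists_isUnit_congr_eq_one_and_eq_diagonal {M C : Matrix ι ι 𝕜} (hM : M.PosDef)
    (hC : C.IsHermitian) : ∃ (U : Matrix ι ι 𝕜) (γ : ι → ℝ), IsUnit U ∧
      Uᴴ * M * U = 1 ∧ Uᴴ * C * U = diagonal (fun i ↦ (γ i : 𝕜)) := by
  obtain ⟨S, hS, hSM⟩ := exists_isUnit_conjTranspose_mul_mul_eq_one hM
  have hSC : (Sᴴ * C * S).IsHermitian := isHermitian_conjTranspose_mul_mul S hC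
  let V : Matrix ι ι 𝕜 := hSC.eigenvectorUnitary
  have congr_mul (N : Matrix ι ι 𝕜) : (S * V)ᴴ * N * (S * V) = star V * (Sᴴ * N * S) * V := by
    simp only [conjTranspose_mul, star_eq_conjTranspose, Matrix.mul_assoc]
  refine ⟨S * V, hSC.eigenvalues, hS.mul Unitary.isUnit_coe, ?_, ?_⟩
  · rw [congr_mul, hSM, mul_one, Unitary.coe_star_mul_self]
  · rw [congr_mul]
    have hV := hSC.conjStarAlgAut_star_eigenvectorUnitary
    rwa [Unitary.conjStarAlgAut_star_apply] at hV

end Matrix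

theorem definite_pair_simultaneous_diagonalization_general {ι : Type*} [Fintype ι] [DecidableEq ι]
    {A B : Matrix ι ι ℂ} (hA : A.IsHermitian) (hB : B.IsHermitian)
    (hdef : ∀ x : EuclideanSpace ℂ ι, ‖x‖ = 1 →
      0 < (star x.ofLp ⬝ᵥ A *ᵥ x.ofLp).re ^ 2 + (star x.ofLp ⬝ᵥ B *ᵥ x.ofLp).re ^ 2) :
    ∃ (U : Matrix ι ι ℂ) (α β : ι → ℝ), IsUnit U ∧
      Uᴴ * A * U = diagonal (fun i ↦ (α i : ℂ)) ∧ Uᴴ * B * U = diagonal (fun i ↦ (β i : ℂ)) := by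
  obtain ⟨θ, hM⟩ := exists_posDef_cos_smul_add_sin_smul hA hB hdef
  set c := Real.cos θ
  set s := Real.sin θ
  have hcs : c * c + s * s = 1 := by simpa only [sq] using Real.cos_sq_add_sin_sq θ
  have hC : (-s • A + c • B).IsHermitian := (hA.smul (.all _)).add (hB.smul (.all _))
  obtain ⟨U, γ, hU, hUM, hUC⟩ := exists_isUnit_congr_eq_one_and_eq_diagonal hM hC
  have congr_comb (p q : ℝ) : Uᴴ * (p • (c • A + s • B) + q • (-s • A + c • B)) * U =
      diagonal (fun i ↦ ((p + q * γ i : ℝ) : ℂ)) := by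
    rw [Matrix.mul_add, Matrix.add_mul, Matrix.mul_smul, Matrix.mul_smul, Matrix.smul_mul,
      Matrix.smul_mul, hUM, hUC, ← diagonal_one, ← diagonal_smul, ← diagonal_smul, diagonal_add]
    congr 1 with i
    simp
  refine ⟨U, fun i ↦ c + -s * γ i, fun i ↦ s + c * γ i, hU, ?_, ?_⟩
  · rw [← congr_comb]
    congr
    calc A = (c * c + s * s) • A := by rw [hcs, one_smul]
      _ = c • (c • A + s • B) + -s • (-s • A + c • B) := by module
  · rw [← congr_comb]
    congr
    calc B = (c * c + s * s) • B := by rw [hcs, one_smul]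
      _ = s • (c • A + s • B) + c • (-s • A + c • B) := by module

/-- Paper Theorem 4.6 (Stewart, Corollary VI.1.19): a definite Hermitian pair (A, B)
can be simultaneously diagonalized by congruence with real diagonal factors. -/
theorem definite_pair_simultaneous_diagonalization {n : ℕ}
    (A B : Matrix (Fin n) (Fin n) ℂ)
    (hA : A.IsHermitian) (hB : B.IsHermitian)
    (hdef : ∃ c > (0 : ℝ), ∀ x : EuclideanSpace ℂ (Fin n), ‖x‖ = 1 →
      c ≤ (star (x : Fin n → ℂ) ⬝ᵥ A.mulVec (x : Fin n → ℂ)).re ^ 2 +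
          (star (x : Fin n → ℂ) ⬝ᵥ B.mulVec (x : Fin n → ℂ)).re ^ 2) :
    ∃ (U : Matrix (Fin n) (Fin n) ℂ) (α β : Fin n → ℝ),
      IsUnit U ∧
      Uᴴ * A * U = Matrix.diagonal (fun i => (α i : ℂ)) ∧
      Uᴴ * B * U = Matrix.diagonal (fun i => (β i : ℂ)) := by
  obtain ⟨c, hc, hdef⟩ := hdef
  exact definite_pair_simultaneous_diagonalization_general hA hB
    fun x hx ↦ hc.trans_le (hdef x hx)
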